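/- Let 0 < p < 1 and let α, β be real with α ≥ β > 0, α² + β² = 1, and suppose 1/2 ≤ α² < p²/(1−p+p²). Then the maximum achievable fidelity under trace-preserving LOCC of ρ(χ(α), Λ_p) equals F*(ρ(χ(α), Λ_p)) = (1 + α²(1−p)/p)/2. -/

import Mathlib

open Matrix Complex
open scoped Kronecker ComplexOrder

/-- Index type for two qubits: the product basis of ℂ² ⊗ ℂ². -/
abbrev Q2 := Fin 2 × Fin 2

/-- Kraus operator `M₀` of the amplitude damping channel. -/
noncomputable def M0 (p : ℝ) : Matrix (Fin 2) (Fin 2) ℂ :=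
  !![1, 0; 0, (Real.sqrt (1 - p) : ℂ)]

/-- Kraus operator `M₁` of the amplitude damping channel. -/
noncomputable def M1 (p : ℝ) : Matrix (Fin 2) (Fin 2) ℂ :=
  !![0, (Real.sqrt p : ℂ); 0, 0]

/-- Outer product `|ψ⟩⟨ψ|` of a two-qubit vector. -/
noncomputable def outer (ψ : Q2 → ℂ) : Matrix Q2 Q2 ℂ :=
  Matrix.of fun i j => ψ i * star (ψ j)

/-- The state `ρ(χ, Λ_p)` obtained by applying the amplitude damping channel
with parameter `p` to the second qubit: `Σᵢ (I ⊗ Mᵢ) ρ (I ⊗ Mᵢ)†`. -/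
noncomputable def ampDamp (p : ℝ) (ρ : Matrix Q2 Q2 ℂ) : Matrix Q2 Q2 ℂ :=
  ((1 : Matrix (Fin 2) (Fin 2) ℂ) ⊗ₖ M0 p) * ρ * ((1 : Matrix (Fin 2) (Fin 2) ℂ) ⊗ₖ M0 p)ᴴ +
  ((1 : Matrix (Fin 2) (Fin 2) ℂ) ⊗ₖ M1 p) * ρ * ((1 : Matrix (Fin 2) (Fin 2) ℂ) ⊗ₖ M1 p)ᴴ

/-- The pure state `|χ⟩ = a|00⟩ + b|11⟩`. -/
noncomputable def ketChi (a b : ℝ) : Q2 → ℂ :=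
  fun ij => if ij = ((0 : Fin 2), (0 : Fin 2)) then (a : ℂ)
    else if ij = ((1 : Fin 2), (1 : Fin 2)) then (b : ℂ) else 0

/-- The maximally entangled state `|Φ⁺⟩ = (|00⟩ + |11⟩)/√2`. -/
noncomputable def phiPlus : Q2 → ℂ := ketChi (Real.sqrt 2)⁻¹ (Real.sqrt 2)⁻¹

/-- The optimal transmitted state `|χ₀⟩ = (1/√(2−p))|00⟩ + √((1−p)/(2−p))|11⟩`. -/
noncomputable def ketChi0 (p : ℝ) : Q2 → ℂ :=
  ketChi (Real.sqrt (1 / (2 - p))) (Real.sqrt ((1 - p) / (2 - p)))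

/-- Reduced density matrix on the first qubit (trace out the second qubit). -/
noncomputable def trSecond (ρ : Matrix Q2 Q2 ℂ) : Matrix (Fin 2) (Fin 2) ℂ :=
  Matrix.of fun i k => ∑ j : Fin 2, ρ (i, j) (k, j)

/-- Reduced density matrix on the second qubit (trace out the first qubit). -/
noncomputable def trFirst (ρ : Matrix Q2 Q2 ℂ) : Matrix (Fin 2) (Fin 2) ℂ :=
  Matrix.of fun j l => ∑ i : Fin 2, ρ (i, j) (i, l)

/-- A unit vector `ψ ∈ ℂ²⊗ℂ²` is maximally entangled if both reduced density
matrices of `|ψ⟩⟨ψ|` equal `I/2`. -/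
def MaxEnt (ψ : Q2 → ℂ) : Prop :=
  (∑ ij : Q2, Complex.normSq (ψ ij)) = 1 ∧
  trSecond (outer ψ) = (1 / 2 : ℂ) • (1 : Matrix (Fin 2) (Fin 2) ℂ) ∧
  trFirst (outer ψ) = (1 / 2 : ℂ) • (1 : Matrix (Fin 2) (Fin 2) ℂ)

/-- The real expectation value `⟨ψ|ρ|ψ⟩`. -/
noncomputable def expectation (ψ : Q2 → ℂ) (ρ : Matrix Q2 Q2 ℂ) : ℝ :=
  (∑ i : Q2, ∑ j : Q2, star (ψ i) * ρ i j * ψ j).re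

/-- Fidelity (fully entangled fraction): `F(ρ) = sup_Ψ ⟨Ψ|ρ|Ψ⟩` over maximally
entangled unit vectors `Ψ`. -/
noncomputable def Fid (ρ : Matrix Q2 Q2 ℂ) : ℝ :=
  sSup {x : ℝ | ∃ ψ : Q2 → ℂ, MaxEnt ψ ∧ x = expectation ψ ρ}

/-- Partial transposition on the second qubit: `(ρ^Γ)_{(i,j),(k,l)} = ρ_{(i,l),(k,j)}`. -/
def ptrans (ρ : Matrix Q2 Q2 ℂ) : Matrix Q2 Q2 ℂ :=
  Matrix.of fun ij kl => ρ (ij.1, kl.2) (kl.1, ij.2)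

/-- The Verstraete–Verschelde maximum achievable fidelity under trace-preserving LOCC,
as the value of the semidefinite program
`F*(ρ) = sup { 1/2 − Tr(X ρ^Γ) : X Hermitian, 0 ≤ X ≤ I, −I/2 ≤ X^Γ ≤ I/2 }`. -/
noncomputable def FStar (ρ : Matrix Q2 Q2 ℂ) : ℝ :=
  sSup {x : ℝ | ∃ X : Matrix Q2 Q2 ℂ,
    X.IsHermitian ∧ X.PosSemidef ∧ ((1 : Matrix Q2 Q2 ℂ) - X).PosSemidef ∧
    (ptrans X + (1 / 2 : ℂ) • (1 : Matrix Q2 Q2 ℂ)).PosSemidef ∧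
    ((1 / 2 : ℂ) • (1 : Matrix Q2 Q2 ℂ) - ptrans X).PosSemidef ∧
    x = 1 / 2 - ((X * ptrans ρ).trace).re}

/-- The Pauli matrix `σ_y`. -/
noncomputable def sigY : Matrix (Fin 2) (Fin 2) ℂ := !![0, -Complex.I; Complex.I, 0]

/-- The matrix `ρ (σ_y⊗σ_y) ρ̄ (σ_y⊗σ_y)` whose eigenvalues define the concurrence. -/
noncomputable def Rmat (ρ : Matrix Q2 Q2 ℂ) : Matrix Q2 Q2 ℂ :=
  ρ * (sigY ⊗ₖ sigY) * ρ.map (starRingEnd ℂ) * (sigY ⊗ₖ sigY)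

/-- `c` is the concurrence of `ρ`: `c = max(0, λ₁ − λ₂ − λ₃ − λ₄)` where
`λ₁ ≥ λ₂ ≥ λ₃ ≥ λ₄ ≥ 0` are the square roots of the eigenvalues (with multiplicity)
of `ρ (σ_y⊗σ_y) ρ̄ (σ_y⊗σ_y)`. -/
def IsConcurrence (ρ : Matrix Q2 Q2 ℂ) (c : ℝ) : Prop :=
  ∃ lam : Fin 4 → ℝ,
    (∀ i j : Fin 4, i ≤ j → lam j ≤ lam i) ∧
    (∀ i : Fin 4, 0 ≤ lam i) ∧
    (Rmat ρ).charpoly = ∏ i : Fin 4, (Polynomial.X - Polynomial.C ((lam i : ℂ) ^ 2)) ∧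
    c = max 0 (lam 0 - lam 1 - lam 2 - lam 3)

/-- `μ` is an eigenvalue of the matrix `A`. -/
def IsEigenvalue (A : Matrix Q2 Q2 ℂ) (μ : ℂ) : Prop :=
  ∃ v : Q2 → ℂ, v ≠ 0 ∧ A *ᵥ v = μ • v

/-!
Weak duality for the semidefinite program: if `Q ≥ 0` and `(ρ + Q)^Γ ≥ 0`, then
`F*(ρ) ≤ (1 + Tr Q)/2`, with equality once some feasible `X` satisfies
`Tr(X (ρ + Q)^Γ) = 0 = Tr(Q (I/2 - X^Γ))`.

For the damped state one can take `Q = (α² (1-p) / p) |01⟩⟨01|` and `X = |v⟩⟨v| / 2`, where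
`v = |01⟩ - t |10⟩` and `t = α √(1-p) / (β p)`: the block of `(ρ + Q)^Γ` on `|01⟩, |10⟩` has rank
one with kernel `v`. The upper bound on `α²` says that `t² ≤ 1`, which is what makes `X` feasible.
-/

theorem trace_mul_nonneg_of_posSemidef {n 𝕜 : Type*} [Fintype n] [RCLike 𝕜] {A B : Matrix n n 𝕜}
    (hA : A.PosSemidef) (hB : B.PosSemidef) : 0 ≤ (A * B).trace := by
  classical
  open scoped MatrixOrder in
  obtain ⟨C, rfl⟩ := CStarAlgebra.nonneg_iff_eq_star_mul_self.mp hB.nonneg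
  rw [← Matrix.mul_assoc, Matrix.trace_mul_comm, ← Matrix.mul_assoc]
  exact (hA.mul_mul_conjTranspose_same C).trace_nonneg

theorem hermitian_form_nonneg {a b x : ℝ} (ha : 0 ≤ a) (hb : 0 ≤ b) (hx : x ^ 2 ≤ a * b)
    (u v : ℂ) :
    0 ≤ a * Complex.normSq u + 2 * x * (u * star v).re + b * Complex.normSq v := by
  rcases ha.eq_or_lt with rfl | ha
  · obtain rfl : x = 0 := by simpa [sq_nonpos_iff] using hx
    simpa using mul_nonneg hb (Complex.normSq_nonneg v)
  · have completed_square :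
        a * (a * Complex.normSq u + 2 * x * (u * star v).re + b * Complex.normSq v) =
          Complex.normSq (a * u + x * v) + (a * b - x ^ 2) * Complex.normSq v := by
      simp only [Complex.normSq_apply, RCLike.star_def, mul_re, conj_re, conj_im, mul_neg,
        sub_neg_eq_add, add_re, ofReal_re, ofReal_im, zero_mul, sub_zero, add_im, mul_im, add_zero]
      ring
    refine nonneg_of_mul_nonneg_right (completed_square ▸ ?_) ha
    exact add_nonneg (Complex.normSq_nonneg _)
      (mul_nonneg (sub_nonneg.mpr hx) (Complex.normSq_nonneg v))

theorem exists_sq_le_one_and_mul_eq {x y : ℝ} (h : x ^ 2 ≤ y ^ 2) :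
    ∃ t : ℝ, t ^ 2 ≤ 1 ∧ t * y = x := by
  refine ⟨x / y, ?_, div_mul_cancel_of_imp ?_⟩
  · rw [div_pow]
    exact div_le_one_of_le₀ h (sq_nonneg y)
  · rintro rfl
    simpa [sq_nonpos_iff] using h

section PartialTranspose

theorem ptrans_add (A B : Matrix Q2 Q2 ℂ) : ptrans (A + B) = ptrans A + ptrans B := rfl

theorem trace_mul_ptrans (A B : Matrix Q2 Q2 ℂ) :
    (A * ptrans B).trace = (B * ptrans A).trace := by
  simp only [Matrix.trace, Matrix.diag_apply, Matrix.mul_apply, ptrans, Matrix.of_apply,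
    Fintype.sum_prod_type, Fin.sum_univ_two]
  ring

end PartialTranspose

section Duality

/-- The constraints `0 ≤ X ≤ I`, `-I/2 ≤ X^Γ ≤ I/2` of the semidefinite program defining `FStar`.
Hermiticity is not listed since it is part of `0 ≤ X`. -/
structure FStarFeasible (X : Matrix Q2 Q2 ℂ) : Prop where
  posSemidef : X.PosSemidef
  le_one : (1 - X).PosSemidef
  neg_half_le_ptrans : (ptrans X + (1 / 2 : ℂ) • (1 : Matrix Q2 Q2 ℂ)).PosSemidef
  ptrans_le_half : ((1 / 2 : ℂ) • (1 : Matrix Q2 Q2 ℂ) - ptrans X).PosSemidef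

variable {ρ Q X : Matrix Q2 Q2 ℂ}

theorem duality_gap (ρ Q X : Matrix Q2 Q2 ℂ) :
    (1 + Q.trace.re) / 2 - (1 / 2 - (X * ptrans ρ).trace.re) =
      (X * ptrans (ρ + Q)).trace.re +
        (Q * ((1 / 2 : ℂ) • (1 : Matrix Q2 Q2 ℂ) - ptrans X)).trace.re := by
  have half_re (z : ℂ) : ((1 / 2 : ℂ) * z).re = z.re / 2 := by
    simp [Complex.mul_re, div_eq_inv_mul]
  rw [ptrans_add, Matrix.mul_add, Matrix.mul_sub, Matrix.mul_smul, Matrix.mul_one,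
    Matrix.trace_add, Matrix.trace_sub, Matrix.trace_smul, trace_mul_ptrans X Q,
    smul_eq_mul, Complex.add_re, Complex.sub_re, half_re]
  ring

theorem objective_le_of_dual (hX : FStarFeasible X) (hQ : Q.PosSemidef)
    (hρQ : (ptrans (ρ + Q)).PosSemidef) :
    1 / 2 - (X * ptrans ρ).trace.re ≤ (1 + Q.trace.re) / 2 := by
  have primal_slack := (Complex.le_def.mp (trace_mul_nonneg_of_posSemidef hX.posSemidef hρQ)).1
  have dual_slack := (Complex.le_def.mp (trace_mul_nonneg_of_posSemidef hQ hX.ptrans_le_half)).1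
  rw [← sub_nonneg, duality_gap]
  exact add_nonneg primal_slack dual_slack

theorem FStar_eq_of_complementary_slackness (hX : FStarFeasible X) (hQ : Q.PosSemidef)
    (hρQ : (ptrans (ρ + Q)).PosSemidef) (primal_slack : (X * ptrans (ρ + Q)).trace = 0)
    (dual_slack : (Q * ((1 / 2 : ℂ) • (1 : Matrix Q2 Q2 ℂ) - ptrans X)).trace = 0) :
    FStar ρ = (1 + Q.trace.re) / 2 := by
  refine IsGreatest.csSup_eq ⟨⟨X, hX.posSemidef.isHermitian, hX.posSemidef, hX.le_one,
    hX.neg_half_le_ptrans, hX.ptrans_le_half, ?_⟩, ?_⟩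
  · rw [← sub_eq_zero, duality_gap, primal_slack, dual_slack, Complex.zero_re, add_zero]
  · rintro _ ⟨Y, -, hY, hY_le, hY_neg, hY_half, rfl⟩
    exact objective_le_of_dual ⟨hY, hY_le, hY_neg, hY_half⟩ hQ hρQ

end Duality

section XMatrix

/-- The real "X-shaped" operator, supported on the diagonal and the antidiagonal in the product
basis: `D i j` is the coefficient of `|ij⟩⟨ij|`, while `x` is that of `|00⟩⟨11| + |11⟩⟨00|` and `y`
that of `|01⟩⟨10| + |10⟩⟨01|`. -/
noncomputable def xMatrix (D : Matrix (Fin 2) (Fin 2) ℝ) (x y : ℝ) : Matrix Q2 Q2 ℂ :=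
  Matrix.diagonal (fun ij => (D ij.1 ij.2 : ℂ)) +
    (x : ℂ) • (Matrix.single (0, 0) (1, 1) 1 + Matrix.single (1, 1) (0, 0) 1) +
    (y : ℂ) • (Matrix.single (0, 1) (1, 0) 1 + Matrix.single (1, 0) (0, 1) 1)

variable (D E : Matrix (Fin 2) (Fin 2) ℝ) (x y z w : ℝ)

theorem xMatrix_add : xMatrix D x y + xMatrix E z w = xMatrix (D + E) (x + z) (y + w) := by
  simp only [xMatrix, Matrix.add_apply, Complex.ofReal_add, ← Matrix.diagonal_add]
  module

theorem xMatrix_sub : xMatrix D x y - xMatrix E z w = xMatrix (D - E) (x - z) (y - w) := by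
  simp only [xMatrix, Matrix.sub_apply, Complex.ofReal_sub, ← Matrix.diagonal_sub]
  module

theorem smul_one_eq_xMatrix (c : ℝ) :
    (c : ℂ) • (1 : Matrix Q2 Q2 ℂ) = xMatrix !![c, c; c, c] 0 0 := by
  ext ⟨i, j⟩ ⟨k, l⟩
  fin_cases i <;> fin_cases j <;> fin_cases k <;> fin_cases l <;> simp [xMatrix]

theorem one_eq_xMatrix : (1 : Matrix Q2 Q2 ℂ) = xMatrix !![1, 1; 1, 1] 0 0 := by
  simpa using smul_one_eq_xMatrix 1

theorem half_smul_one_eq_xMatrix :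
    (1 / 2 : ℂ) • (1 : Matrix Q2 Q2 ℂ) = xMatrix !![1 / 2, 1 / 2; 1 / 2, 1 / 2] 0 0 := by
  simpa using smul_one_eq_xMatrix (1 / 2)

theorem ptrans_xMatrix : ptrans (xMatrix D x y) = xMatrix D y x := by
  ext ⟨i, j⟩ ⟨k, l⟩
  fin_cases i <;> fin_cases j <;> fin_cases k <;> fin_cases l <;> simp [ptrans, xMatrix]

theorem isHermitian_xMatrix : (xMatrix D x y).IsHermitian := by
  ext ⟨i, j⟩ ⟨k, l⟩
  fin_cases i <;> fin_cases j <;> fin_cases k <;> fin_cases l <;> simp [xMatrix]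

theorem trace_xMatrix : (xMatrix D x y).trace = (∑ i, ∑ j, D i j : ℝ) := by
  simp [Matrix.trace, xMatrix, Fintype.sum_prod_type]

theorem trace_xMatrix_mul_xMatrix : (xMatrix D x y * xMatrix E z w).trace =
    (∑ i, ∑ j, D i j * E i j + 2 * (x * z + y * w) : ℝ) := by
  simp only [Matrix.trace, xMatrix, smul_add, smul_single, smul_eq_mul, mul_one, diag_apply,
    Matrix.mul_apply, Matrix.add_apply, Fintype.sum_prod_type, Fin.sum_univ_two, Prod.mk.injEq,
    one_ne_zero, and_false, not_false_eq_true, single_apply_of_ne, zero_add, add_zero, false_and,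
    zero_ne_one, and_true, ne_eq, diagonal_apply_ne, diagonal_apply_eq, mul_zero,
    single_apply_same, ofReal_add, ofReal_mul, ofReal_ofNat]
  ring

theorem star_dotProduct_xMatrix_mulVec (v : Q2 → ℂ) :
    star v ⬝ᵥ (xMatrix D x y *ᵥ v) =
      ((D 0 0 * Complex.normSq (v (0, 0)) + 2 * x * (v (0, 0) * star (v (1, 1))).re
          + D 1 1 * Complex.normSq (v (1, 1)))
        + (D 0 1 * Complex.normSq (v (0, 1)) + 2 * y * (v (0, 1) * star (v (1, 0))).re
          + D 1 0 * Complex.normSq (v (1, 0))) : ℝ) := by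
  apply Complex.ext <;>
    simp only [dotProduct, Matrix.mulVec, xMatrix, Pi.star_apply, RCLike.star_def, smul_add,
      smul_single, smul_eq_mul, mul_one, Matrix.add_apply, Fintype.sum_prod_type,
      Fin.sum_univ_two, Prod.mk.injEq, one_ne_zero, and_false, not_false_eq_true,
      single_apply_of_ne, zero_add, add_zero, zero_ne_one, and_true, ne_eq, diagonal_apply_ne,
      diagonal_apply_eq, zero_mul, single_apply_same, add_re, mul_re, conj_re, ofReal_re,
      ofReal_im, sub_zero, conj_im, add_im, mul_im, neg_mul, sub_neg_eq_add, normSq_apply,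
      mul_neg] <;>
    ring

theorem posSemidef_xMatrix {a b c d x y : ℝ} (ha : 0 ≤ a) (hb : 0 ≤ b) (hc : 0 ≤ c) (hd : 0 ≤ d)
    (hx : x ^ 2 ≤ a * d) (hy : y ^ 2 ≤ b * c) : (xMatrix !![a, b; c, d] x y).PosSemidef := by
  refine .of_dotProduct_mulVec_nonneg (isHermitian_xMatrix _ x y) fun v => ?_
  rw [star_dotProduct_xMatrix_mulVec, Complex.zero_le_real]
  exact add_nonneg (hermitian_form_nonneg ha hd hx _ _) (hermitian_form_nonneg hb hc hy _ _)

end XMatrix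

section DampedState

theorem mul_outer_mul_conjTranspose (A : Matrix Q2 Q2 ℂ) (ψ : Q2 → ℂ) :
    A * outer ψ * Aᴴ = outer (A *ᵥ ψ) := by
  change A * Matrix.vecMulVec ψ (star ψ) * Aᴴ = Matrix.vecMulVec (A *ᵥ ψ) (star (A *ᵥ ψ))
  rw [Matrix.mul_vecMulVec, Matrix.vecMulVec_mul, Matrix.star_mulVec]

theorem one_kronecker_M0_mulVec_ketChi (p a b : ℝ) :
    ((1 : Matrix (Fin 2) (Fin 2) ℂ) ⊗ₖ M0 p) *ᵥ ketChi a b = ketChi a (b * √(1 - p)) := by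
  ext ⟨i, j⟩
  fin_cases i <;> fin_cases j <;>
    simp [Matrix.mulVec, dotProduct, M0, ketChi, Fintype.sum_prod_type, mul_comm]

theorem one_kronecker_M1_mulVec_ketChi (p a b : ℝ) :
    ((1 : Matrix (Fin 2) (Fin 2) ℂ) ⊗ₖ M1 p) *ᵥ ketChi a b =
      Pi.single (1, 0) ((b * √p : ℝ) : ℂ) := by
  ext ⟨i, j⟩
  fin_cases i <;> fin_cases j <;>
    simp [Matrix.mulVec, dotProduct, M1, ketChi, Fintype.sum_prod_type, mul_comm]

theorem outer_ketChi (a b : ℝ) :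
    outer (ketChi a b) = xMatrix !![a ^ 2, 0; 0, b ^ 2] (a * b) 0 := by
  ext ⟨i, j⟩ ⟨k, l⟩
  fin_cases i <;> fin_cases j <;> fin_cases k <;> fin_cases l <;>
    simp [outer, ketChi, xMatrix, sq, mul_comm]

theorem outer_single_one_zero (c : ℝ) :
    outer (Pi.single (1, 0) (c : ℂ)) = xMatrix !![0, 0; c ^ 2, 0] 0 0 := by
  ext ⟨i, j⟩ ⟨k, l⟩
  fin_cases i <;> fin_cases j <;> fin_cases k <;> fin_cases l <;>
    simp [outer, xMatrix, sq]

theorem ampDamp_outer_ketChi {p : ℝ} (hp0 : 0 ≤ p) (hp1 : p ≤ 1) (a b : ℝ) :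
    ampDamp p (outer (ketChi a b)) =
      xMatrix !![a ^ 2, 0; b ^ 2 * p, b ^ 2 * (1 - p)] (a * (b * √(1 - p))) 0 := by
  rw [ampDamp, mul_outer_mul_conjTranspose, mul_outer_mul_conjTranspose,
    one_kronecker_M0_mulVec_ketChi, one_kronecker_M1_mulVec_ketChi, outer_ketChi,
    outer_single_one_zero, xMatrix_add, mul_pow, mul_pow, Real.sq_sqrt (sub_nonneg.mpr hp1),
    Real.sq_sqrt hp0]
  simp

end DampedState

section Optimum

/-- The operator `|v⟩⟨v| / 2` with `v = |01⟩ - t |10⟩`, optimal in the semidefinite program for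
`t = α √(1-p) / (β p)`. -/
noncomputable def testOperator (t : ℝ) : Matrix Q2 Q2 ℂ :=
  xMatrix !![0, 1 / 2; t ^ 2 / 2, 0] 0 (-(t / 2))

/-- The dual variable `q |01⟩⟨01|`, multiplier of the constraint `X^Γ ≤ I/2`. -/
noncomputable def dualOperator (q : ℝ) : Matrix Q2 Q2 ℂ :=
  xMatrix !![0, q; 0, 0] 0 0

theorem half_sub_ptrans_testOperator (t : ℝ) :
    (1 / 2 : ℂ) • (1 : Matrix Q2 Q2 ℂ) - ptrans (testOperator t) =
      xMatrix !![1 / 2, 0; 1 / 2 - t ^ 2 / 2, 1 / 2] (t / 2) 0 := by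
  rw [half_smul_one_eq_xMatrix, testOperator, ptrans_xMatrix, xMatrix_sub,
    Matrix.eta_fin_two (_ - _)]
  simp

theorem fStarFeasible_testOperator {t : ℝ} (ht : t ^ 2 ≤ 1) :
    FStarFeasible (testOperator t) where
  posSemidef := by
    apply posSemidef_xMatrix <;> nlinarith
  le_one := by
    have one_sub_eq :
        1 - testOperator t = xMatrix !![1, 1 / 2; 1 - t ^ 2 / 2, 1] 0 (t / 2) := by
      rw [one_eq_xMatrix, testOperator, xMatrix_sub, Matrix.eta_fin_two (_ - _)]
      norm_num
    rw [one_sub_eq]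
    apply posSemidef_xMatrix <;> nlinarith
  neg_half_le_ptrans := by
    have ptrans_add_half_eq : ptrans (testOperator t) + (1 / 2 : ℂ) • (1 : Matrix Q2 Q2 ℂ) =
        xMatrix !![1 / 2, 1; t ^ 2 / 2 + 1 / 2, 1 / 2] (-(t / 2)) 0 := by
      rw [half_smul_one_eq_xMatrix, testOperator, ptrans_xMatrix, xMatrix_add]
      norm_num
    rw [ptrans_add_half_eq]
    apply posSemidef_xMatrix <;> nlinarith
  ptrans_le_half := by
    rw [half_sub_ptrans_testOperator]
    apply posSemidef_xMatrix <;> nlinarith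

theorem trace_testOperator_mul_xMatrix (t : ℝ) (D : Matrix (Fin 2) (Fin 2) ℝ) (x y : ℝ) :
    (testOperator t * xMatrix D x y).trace = ((D 0 1 + t ^ 2 * D 1 0) / 2 - t * y : ℝ) := by
  rw [testOperator, trace_xMatrix_mul_xMatrix]
  simp only [Fin.sum_univ_two, Matrix.of_apply, Matrix.cons_val_zero, Matrix.cons_val_one]
  congr 1
  ring

theorem posSemidef_dualOperator {q : ℝ} (hq : 0 ≤ q) : (dualOperator q).PosSemidef := by
  apply posSemidef_xMatrix <;> simp [hq]

theorem trace_dualOperator (q : ℝ) : (dualOperator q).trace = q := by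
  simp [dualOperator, trace_xMatrix]

theorem trace_dualOperator_mul_half_sub_ptrans_testOperator (q t : ℝ) :
    (dualOperator q * ((1 / 2 : ℂ) • (1 : Matrix Q2 Q2 ℂ) - ptrans (testOperator t))).trace =
      0 := by
  rw [half_sub_ptrans_testOperator, dualOperator, trace_xMatrix_mul_xMatrix]
  simp

theorem ptrans_ampDamp_add_dualOperator {p : ℝ} (hp0 : 0 ≤ p) (hp1 : p ≤ 1) (a b q : ℝ) :
    ptrans (ampDamp p (outer (ketChi a b)) + dualOperator q) =
      xMatrix !![a ^ 2, q; b ^ 2 * p, b ^ 2 * (1 - p)] 0 (a * (b * √(1 - p))) := by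
  rw [ampDamp_outer_ketChi hp0 hp1, dualOperator, xMatrix_add, ptrans_xMatrix]
  simp

end Optimum

theorem FStar_regime_two_general (p α β : ℝ) (hp0 : 0 < p) (hp1 : p ≤ 1)
    (hregime : α ^ 2 * (1 - p) ≤ (β * p) ^ 2) :
    FStar (ampDamp p (outer (ketChi α β))) = (1 + α ^ 2 * (1 - p) / p) / 2 := by
  have h_one_sub : 0 ≤ 1 - p := sub_nonneg.mpr hp1
  have sqrt_sq : √(1 - p) ^ 2 = 1 - p := Real.sq_sqrt h_one_sub
  obtain ⟨t, ht_le, ht⟩ : ∃ t : ℝ, t ^ 2 ≤ 1 ∧ t * (β * p) = α * √(1 - p) :=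
    exists_sq_le_one_and_mul_eq (by rwa [mul_pow, sqrt_sq])
  obtain ⟨q, hq⟩ : ∃ q : ℝ, q = α ^ 2 * (1 - p) / p := ⟨_, rfl⟩
  have hq_mul : q * p = α ^ 2 * (1 - p) := by rw [hq, div_mul_cancel₀ _ hp0.ne']
  have hq_eq : q = t ^ 2 * (β ^ 2 * p) := by
    refine mul_right_cancel₀ hp0.ne' ?_
    linear_combination hq_mul - (t * (β * p) + α * √(1 - p)) * ht - α ^ 2 * sqrt_sq
  have hq_nonneg : 0 ≤ q := by rw [hq_eq]; positivity
  rw [← hq, ← Complex.ofReal_re q, ← trace_dualOperator]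
  refine FStar_eq_of_complementary_slackness (fStarFeasible_testOperator ht_le)
    (posSemidef_dualOperator hq_nonneg) ?_ ?_
    (trace_dualOperator_mul_half_sub_ptrans_testOperator q t)
  · rw [ptrans_ampDamp_add_dualOperator hp0.le hp1]
    refine posSemidef_xMatrix (by positivity) hq_nonneg (by positivity) (by positivity)
      (by rw [zero_pow two_ne_zero]; positivity) (le_of_eq ?_)
    linear_combination α ^ 2 * β ^ 2 * sqrt_sq - β ^ 2 * hq_mul
  · rw [ptrans_ampDamp_add_dualOperator hp0.le hp1, trace_testOperator_mul_xMatrix,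
      Complex.ofReal_eq_zero]
    simp only [Matrix.of_apply, Matrix.cons_val_zero, Matrix.cons_val_one]
    linear_combination hq_eq / 2 + t * β * ht

/-- For `0 < p < 1`, `α ≥ β > 0`, `α² + β² = 1` and
`1/2 ≤ α² < p²/(1−p+p²)`, the maximum achievable fidelity under trace-preserving LOCC
of `ρ(χ(α), Λ_p)` equals `(1 + α²(1−p)/p)/2`. -/
theorem FStar_regime_two (p α β : ℝ) (hp0 : 0 < p) (hp1 : p < 1)
    (hba : β ≤ α) (hb : 0 < β) (hnorm : α ^ 2 + β ^ 2 = 1)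
    (hlow : 1 / 2 ≤ α ^ 2) (hhigh : α ^ 2 < p ^ 2 / (1 - p + p ^ 2)) :
    FStar (ampDamp p (outer (ketChi α β))) =
      (1 + α ^ 2 * (1 - p) / p) / 2 := by
  have denom_pos : 0 < 1 - p + p ^ 2 := by nlinarith
  rw [lt_div_iff₀ denom_pos] at hhigh
  exact FStar_regime_two_general p α β hp0 hp1.le (by linear_combination hhigh - p ^ 2 * hnorm)
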